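/- arXiv:math-ph/0604049 — 3 statements merged into one kernel-verified Lean document; each statement's English description precedes it below -/
import Mathlib

section
/- Let ω : ℝ^d → ℝ be twice continuously differentiable with M₂ := sup_x ‖D²ω(x)‖ < ∞, and let s, p > 0, 0 < a < 1 be given. Then for any 0 < λ ≤ a s / M₂ and all x, y ∈ ℝ^d: 𝟙(|x−y| < λ) · 𝟙(|∇ω(y)| ≥ s) / |∇ω(y)|^p ≤ (1+a)^p · 𝟙(|x−y| < λ) · 𝟙(|∇ω(x)| ≥ (1−a)s) / |∇ω(x)|^p. -/
/-!
The bound on the Hessian makes `∇ω` Lipschitz with constant `M₂`, so `|x - y| < lam ≤ a s / M₂`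
gives `|∇ω(x) - ∇ω(y)| ≤ a s` (`norm_gradient_sub_le`). When `|∇ω(y)| ≥ s`, the reverse triangle
inequality yields `|∇ω(x)| ≥ (1 - a) s`, and the triangle inequality together with
`a s ≤ a |∇ω(y)|` yields `|∇ω(x)| ≤ (1 + a) |∇ω(y)|`; raising the latter to the power `-p` gives
the claim.
-/

/-- Mean value inequality for the gradient, in terms of the second Fréchet derivative. -/
theorem norm_gradient_sub_le {d : ℕ} {ω : EuclideanSpace ℝ (Fin d) → ℝ} (hω : ContDiff ℝ 2 ω)
    {M : ℝ} (hM : ∀ x : EuclideanSpace ℝ (Fin d), ‖fderiv ℝ (fderiv ℝ ω) x‖ ≤ M)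
    (x y : EuclideanSpace ℝ (Fin d)) :
    ‖gradient ω x - gradient ω y‖ ≤ M * ‖x - y‖ := by
  have hdiff : Differentiable ℝ (fderiv ℝ ω) :=
    (hω.fderiv_right (m := 1) (by norm_num)).differentiable (by norm_num)
  have h := convex_univ.norm_image_sub_le_of_norm_fderiv_le (𝕜 := ℝ)
    (fun z _ => hdiff z) (fun z _ => hM z) (Set.mem_univ y) (Set.mem_univ x)
  -- The Riesz isomorphism, through which the gradient is defined, is isometric.
  simpa only [gradient, ← map_sub, LinearIsometryEquiv.norm_map] using h

theorem argument_shift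
    (d : ℕ) (ω : EuclideanSpace ℝ (Fin d) → ℝ) (hω : ContDiff ℝ 2 ω)
    (M₂ : ℝ) (hM₂ : ∀ x : EuclideanSpace ℝ (Fin d), ‖fderiv ℝ (fderiv ℝ ω) x‖ ≤ M₂)
    (s p a : ℝ) (hs : 0 < s) (hp : 0 < p) (ha0 : 0 < a) (ha1 : a < 1)
    (lam : ℝ) (hlam0 : 0 < lam) (hlam : lam ≤ a * s / M₂)
    (x y : EuclideanSpace ℝ (Fin d)) :
    (if ‖x - y‖ < lam ∧ s ≤ ‖gradient ω y‖ then ‖gradient ω y‖ ^ (-p) else 0)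
      ≤ (1 + a) ^ p *
        (if ‖x - y‖ < lam ∧ (1 - a) * s ≤ ‖gradient ω x‖ then ‖gradient ω x‖ ^ (-p) else 0) := by
  by_cases h : ‖x - y‖ < lam ∧ s ≤ ‖gradient ω y‖
  · obtain ⟨hxy, hy⟩ := h
    have hM0 : 0 ≤ M₂ := (norm_nonneg (fderiv ℝ (fderiv ℝ ω) x)).trans (hM₂ x)
    -- If `M₂ = 0`, the Lean quotient `a * s / M₂` is `0`, which `0 < lam` excludes.
    have hMpos : 0 < M₂ := by
      refine hM0.lt_of_ne' fun h0 => ?_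
      rw [h0, div_zero] at hlam
      linarith
    have hclose : ‖gradient ω x - gradient ω y‖ ≤ a * s :=
      calc ‖gradient ω x - gradient ω y‖ ≤ M₂ * ‖x - y‖ := norm_gradient_sub_le hω hM₂ x y
        _ ≤ M₂ * lam := by gcongr
        _ ≤ a * s := by rw [mul_comm]; exact (le_div_iff₀ hMpos).mp hlam
    have hlow : (1 - a) * s ≤ ‖gradient ω x‖ := by
      have := norm_sub_norm_le (gradient ω y) (gradient ω x)
      rw [norm_sub_rev] at this
      linarith
    have hup : ‖gradient ω x‖ ≤ (1 + a) * ‖gradient ω y‖ := by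
      have := norm_sub_norm_le (gradient ω x) (gradient ω y)
      have := mul_le_mul_of_nonneg_left hy ha0.le
      linarith
    have hxpos : 0 < ‖gradient ω x‖ := (mul_pos (sub_pos.mpr ha1) hs).trans_le hlow
    have ha : 0 < 1 + a := by linarith
    rw [if_pos ⟨hxy, hy⟩, if_pos ⟨hxy, hlow⟩]
    calc ‖gradient ω y‖ ^ (-p)
        = (1 + a) ^ p * ((1 + a) * ‖gradient ω y‖) ^ (-p) := by
          rw [Real.mul_rpow ha.le (norm_nonneg _), ← mul_assoc, ← Real.rpow_add ha,
            add_neg_cancel, Real.rpow_zero, one_mul]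
      _ ≤ (1 + a) ^ p * ‖gradient ω x‖ ^ (-p) :=
          mul_le_mul_of_nonneg_left
            (Real.rpow_le_rpow_of_nonpos hxpos hup (neg_nonpos.mpr hp.le))
            (Real.rpow_nonneg ha.le p)
  · rw [if_neg h]
    positivity
end

section
/- Let n ≥ 2 be an integer and let a, b, c ∈ ℝ with |c| ≥ ε' for some ε' > 0. Then there exists ν ∈ ℝ with |ν| ≤ 2 and |1 − ν| ≤ 2 such that |ν^n a + (1 − ν)^n b + c| ≥ ε'/2. -/
/-!
One of `ν = 0, 1, 2` always works. By symmetry take `c > 0`. If `ν = 0` and `ν = 1` both fail,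
then `a` and `b` lie within `ε' / 2` of `-c`, so both are negative. At `ν = 2` the value is
`2 ^ n * a + (-1) ^ n * b + c`, where `2 ^ n` is at least `4` for even `n` and at least `8` for
odd `n`; in either case the value is less than `-ε' / 2`.
-/

theorem nu_selection_of_pos
    (n : ℕ) (hn : 2 ≤ n) (a b c ε' : ℝ) (hε' : 0 < ε') (hc : ε' ≤ c) :
    ∃ ν : ℝ, |ν| ≤ 2 ∧ |1 - ν| ≤ 2 ∧ ε' / 2 ≤ |ν ^ n * a + (1 - ν) ^ n * b + c| := by
  have hn0 : n ≠ 0 := by omega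
  by_cases h0 : ε' / 2 ≤ |b + c|
  · exact ⟨0, by norm_num, by norm_num, by simpa [hn0] using h0⟩
  by_cases h1 : ε' / 2 ≤ |a + c|
  · exact ⟨1, by norm_num, by norm_num, by simpa [hn0] using h1⟩
  rw [not_le, abs_lt] at h0 h1
  refine ⟨2, by norm_num, by norm_num, ?_⟩
  rw [show (1 - 2 : ℝ) = -1 by norm_num]
  refine le_abs.2 (Or.inr ?_)
  have ha : a ≤ 0 := by linarith
  rcases n.even_or_odd with he | ho
  · have h4 : (2 : ℝ) ^ 2 ≤ 2 ^ n := pow_le_pow_right₀ (by norm_num) hn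
    have h4a := mul_le_mul_of_nonpos_right h4 ha
    rw [he.neg_one_pow]
    linarith
  · have hn3 : 3 ≤ n := by
      obtain ⟨k, hk⟩ := ho
      omega
    have h8 : (2 : ℝ) ^ 3 ≤ 2 ^ n := pow_le_pow_right₀ (by norm_num) hn3
    have h8a := mul_le_mul_of_nonpos_right h8 ha
    rw [ho.neg_one_pow]
    linarith

theorem nu_selection_lemma
    (n : ℕ) (hn : 2 ≤ n) (a b c ε' : ℝ) (hε' : 0 < ε') (hc : ε' ≤ |c|) :
    ∃ ν : ℝ, |ν| ≤ 2 ∧ |1 - ν| ≤ 2 ∧ ε' / 2 ≤ |ν ^ n * a + (1 - ν) ^ n * b + c| := by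
  rcases le_abs.1 hc with h | h
  · exact nu_selection_of_pos n hn a b c ε' hε' h
  · obtain ⟨ν, h1, h2, h3⟩ := nu_selection_of_pos n hn (-a) (-b) (-c) ε' hε' h
    refine ⟨ν, h1, h2, ?_⟩
    rw [← abs_neg]
    convert h3 using 2
    ring
end

section
/- Let d ≥ 3 and let ω : ℝ^d → ℝ be real-analytic, ℤ^d-periodic, and a Morse function (at every point x with ∇ω(x) = 0 the Hessian D²ω(x) is invertible). Define f_ω(s) = ∫_{[0,1]^d} |∇ω(k)|^{-3} 𝟙(|∇ω(k)| ≥ s) dk for s > 0. Then: if d > 3, f_ω is bounded, i.e. there is c₀ ≥ 0 with f_ω(s) ≤ c₀ for all s > 0; and if d = 3, there is c₀ ≥ 0 with f_ω(s) ≤ c₀ ⟨ln s⟩ for all s > 0. In particular ω satisfies Assumption A with p₀ = 0 when d > 3 and p₀ = 1 when d = 3. -/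
/-!
Every point `a` has a small ball on which `c |x - a| ≤ |∇ω(x)|` for some `c > 0`: at a critical
point because the Hessian is invertible, elsewhere because the gradient is bounded away from zero
(`exists_linear_lower_bound`). Where moreover `|∇ω(x)| ≥ s`, this gives
`|∇ω(x)|⁻³ ≤ 8 c⁻³ (s + |x - a|)⁻³` (`cutoffWeight_le`), so in polar coordinates the integral over
such a ball is bounded by a constant times `∫₀¹ y^(d-1) (s + y)⁻³ dy`. This is at most `1` for
`d > 3`, and at most `log (1 + 1/s) ≤ log 2 + |log s|` for `d = 3` (`integral_radial_le`). By
compactness, finitely many such balls cover the cube (`lintegral_cutoffWeight_le`).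
-/

open MeasureTheory
open scoped ENNReal

/-- Japanese bracket `⟨t⟩ = √(1+t²)`. -/
noncomputable def sabs (t : ℝ) : ℝ := Real.sqrt (1 + t ^ 2)

/-- The unit cube `[0,1]^d`, representing the torus. -/
def unitCube (d : ℕ) : Set (EuclideanSpace ℝ (Fin d)) := {x | ∀ i, x i ∈ Set.Icc (0:ℝ) 1}

/-- `ℤ^d`-periodicity. -/
def ZdPeriodic {d : ℕ} (ω : EuclideanSpace ℝ (Fin d) → ℝ) : Prop :=
  ∀ (x : EuclideanSpace ℝ (Fin d)) (n : Fin d → ℤ),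
    ω (x + (WithLp.equiv 2 (Fin d → ℝ)).symm (fun i => (n i : ℝ))) = ω x

/-- A map with injective derivative at each of its zeros grows at least linearly away from the
centre of a small ball around any point. Away from zeros this is merely continuity, because the
radius is at most `1`; stating both cases in this one form lets every point of the cube be
treated alike. -/
theorem exists_linear_lower_bound {E F : Type*} [NormedAddCommGroup E] [NormedSpace ℝ E]
    [FiniteDimensional ℝ E] [NormedAddCommGroup F] [NormedSpace ℝ F]
    {G : E → F} {a : E} (hG : DifferentiableAt ℝ G a)
    (hcrit : G a = 0 → Function.Injective (fderiv ℝ G a)) :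
    ∃ c : ℝ, 0 < c ∧ c ≤ 1 ∧ ∃ r : ℝ, 0 < r ∧ r ≤ 1 ∧
      ∀ x ∈ Metric.ball a r, c * ‖x - a‖ ≤ ‖G x‖ := by
  suffices h : ∃ c : ℝ, 0 < c ∧ ∀ᶠ x in nhds a, c * ‖x - a‖ ≤ ‖G x‖ by
    obtain ⟨c, hc, h⟩ := h
    obtain ⟨r, hr, h⟩ := Metric.eventually_nhds_iff_ball.1 h
    refine ⟨min c 1, by positivity, min_le_right _ _, min r 1, by positivity, min_le_right _ _,
      fun x hx => ?_⟩
    refine le_trans ?_ (h x (Metric.ball_subset_ball (min_le_left _ _) hx))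
    gcongr
    exact min_le_left _ _
  by_cases h0 : G a = 0
  · obtain ⟨K, hK, hanti⟩ := (fderiv ℝ G a).toLinearMap.exists_antilipschitzWith
      (LinearMap.ker_eq_bot.2 (hcrit h0))
    have hKpos : (0 : ℝ) < K := hK
    have hlow : ∀ v : E, (K : ℝ)⁻¹ * ‖v‖ ≤ ‖fderiv ℝ G a v‖ := by
      intro v
      have := hanti.le_mul_dist v 0
      simp only [dist_zero_right, map_zero, ContinuousLinearMap.coe_coe] at this
      rw [inv_mul_le_iff₀ hKpos]
      exact this
    -- Half of the lower bound `K⁻¹` of the derivative absorbs the first-order Taylor error.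
    refine ⟨(K : ℝ)⁻¹ / 2, by positivity, ?_⟩
    have hlit := hG.hasFDerivAt.isLittleO.def (c := (K : ℝ)⁻¹ / 2) (by positivity)
    filter_upwards [hlit] with x hx
    rw [h0, sub_zero] at hx
    have h1 := hlow (x - a)
    have h2 := norm_sub_norm_le (fderiv ℝ G a (x - a)) (G x)
    rw [norm_sub_rev] at h2
    linarith
  · have hpos : 0 < ‖G a‖ := norm_pos_iff.2 h0
    refine ⟨‖G a‖ / 2, by positivity, ?_⟩
    have h1 : ∀ᶠ x in nhds a, ‖G a‖ / 2 < ‖G x‖ :=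
      hG.continuousAt.norm.eventually (lt_mem_nhds (by linarith))
    filter_upwards [h1, Metric.ball_mem_nhds a one_pos] with x hx hx1
    rw [mem_ball_iff_norm] at hx1
    nlinarith

/-- The allowed growth in `s`: bounded above dimension three, logarithmic in dimension three. -/
noncomputable def growth (d : ℕ) (s : ℝ) : ℝ := if d = 3 then sabs (Real.log s) else 1

theorem growth_nonneg (d : ℕ) (s : ℝ) : 0 ≤ growth d s := by
  unfold growth sabs
  split_ifs <;> positivity

/-- The radial integral behind the theorem. For `d = 3` the integrand is at most `(s + y)⁻¹`, which
integrates to `log (1 + 1 / s)`; for `d > 3` it is at most `1`. -/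
theorem integral_radial_le (d : ℕ) (hd : 3 ≤ d) (s : ℝ) (hs : 0 < s) :
    ∫ y in (0 : ℝ)..1, y ^ (d - 1) * ((s + y) ^ 3)⁻¹ ≤ 2 * growth d s := by
  have hcont : ∀ n m : ℕ, IntervalIntegrable (fun y : ℝ => y ^ n * ((s + y) ^ m)⁻¹)
      volume 0 1 := by
    intro n m
    apply ContinuousOn.intervalIntegrable_of_Icc zero_le_one
    refine ContinuousOn.mul (by fun_prop) (ContinuousOn.inv₀ (by fun_prop) ?_)
    intro y hy
    have : 0 < s + y := by linarith [hy.1]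
    positivity
  unfold growth
  split_ifs with h3
  · subst h3
    have hle : ∫ y in (0 : ℝ)..1, y ^ (3 - 1) * ((s + y) ^ 3)⁻¹
        ≤ ∫ y in (0 : ℝ)..1, y ^ 0 * ((s + y) ^ 1)⁻¹ := by
      refine intervalIntegral.integral_mono_on zero_le_one (hcont _ _) (hcont _ _) ?_
      intro y hy
      have hp : 0 < s + y := by linarith [hy.1]
      rw [pow_zero, one_mul, pow_one, mul_inv_le_iff₀ (by positivity)]
      have : (s + y)⁻¹ * (s + y) ^ 3 = (s + y) ^ 2 := by field_simp
      rw [this]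
      exact pow_le_pow_left₀ hy.1 (by linarith) 2
    have hlog : ∫ y in (0 : ℝ)..1, y ^ 0 * ((s + y) ^ 1)⁻¹ = Real.log ((s + 1) / s) := by
      simp only [pow_zero, one_mul, pow_one]
      rw [intervalIntegral.integral_comp_add_left (fun y => y⁻¹) s, add_zero,
        integral_inv_of_pos hs (by linarith)]
    rw [hlog, Real.log_div (by linarith) hs.ne'] at hle
    have habs : |Real.log s| ≤ sabs (Real.log s) := Real.abs_le_sqrt (by linarith)
    have hone : 1 ≤ sabs (Real.log s) := Real.one_le_sqrt.2 (by nlinarith [sq_nonneg (Real.log s)])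
    have hlog2 : Real.log 2 ≤ 1 := by linarith [Real.log_two_lt_d9]
    rcases le_total s 1 with h1 | h1
    · have := Real.log_le_log (by linarith) (show s + 1 ≤ 2 by linarith)
      linarith [neg_abs_le (Real.log s)]
    · have := Real.log_le_log (by linarith) (show s + 1 ≤ 2 * s by linarith)
      rw [Real.log_mul two_ne_zero hs.ne'] at this
      linarith
  · have hle : ∫ y in (0 : ℝ)..1, y ^ (d - 1) * ((s + y) ^ 3)⁻¹
        ≤ ∫ y in (0 : ℝ)..1, (1 : ℝ) := by
      refine intervalIntegral.integral_mono_on zero_le_one (hcont _ _) (by simp) ?_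
      intro y hy
      have hp : 0 < s + y := by linarith [hy.1]
      rw [mul_inv_le_iff₀ (by positivity), one_mul]
      calc y ^ (d - 1) ≤ y ^ 3 := pow_le_pow_of_le_one hy.1 hy.2 (by omega)
        _ ≤ (s + y) ^ 3 := pow_le_pow_left₀ hy.1 (by linarith) 3
    simp at hle
    linarith

/-- Polar coordinates reduce the integral over the unit ball to `integral_radial_le`. -/
theorem lintegral_ball_le (d : ℕ) (hd : 3 ≤ d) (a : EuclideanSpace ℝ (Fin d)) (s : ℝ)
    (hs : 0 < s) :
    ∫⁻ x in Metric.ball a 1, ENNReal.ofReal (((s + ‖x - a‖) ^ 3)⁻¹) ≤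
      ENNReal.ofReal (d * volume.real (Metric.ball (0 : EuclideanSpace ℝ (Fin d)) 1) *
        (2 * growth d s)) := by
  have : Nonempty (Fin d) := ⟨⟨0, by omega⟩⟩
  set φ : ℝ → ℝ := (Set.Iio 1).indicator (fun y => ((s + y) ^ 3)⁻¹) with hφ
  have hφ0 : ∀ x : EuclideanSpace ℝ (Fin d), 0 ≤ φ ‖x‖ := by
    intro x
    simp only [hφ, Set.indicator]
    split_ifs <;> positivity
  have hshift : ∫⁻ x in Metric.ball a 1, ENNReal.ofReal (((s + ‖x - a‖) ^ 3)⁻¹)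
      = ∫⁻ x : EuclideanSpace ℝ (Fin d), ENNReal.ofReal (φ ‖x‖) := by
    rw [← lintegral_indicator Metric.isOpen_ball.measurableSet,
      ← lintegral_sub_right_eq_self (fun x => ENNReal.ofReal (φ ‖x‖)) a]
    congr 1
    ext x
    by_cases hx : ‖x - a‖ < 1
    · rw [Set.indicator_of_mem (by rwa [mem_ball_iff_norm]), hφ,
        Set.indicator_of_mem (show ‖x - a‖ ∈ Set.Iio 1 from hx)]
    · rw [Set.indicator_of_notMem (by rwa [mem_ball_iff_norm]), hφ,
        Set.indicator_of_notMem (show ‖x - a‖ ∉ Set.Iio 1 from hx), ENNReal.ofReal_zero]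
  have hprod : ∀ y : ℝ, y ^ (d - 1) • φ y
      = (Set.Iio 1).indicator (fun y => y ^ (d - 1) * ((s + y) ^ 3)⁻¹) y := by
    intro y
    simp only [hφ, Set.indicator, smul_eq_mul]
    split_ifs <;> simp
  have hdim : Module.finrank ℝ (EuclideanSpace ℝ (Fin d)) = d := by simp
  have hint : Integrable (fun x : EuclideanSpace ℝ (Fin d) => φ ‖x‖) := by
    rw [integrable_fun_norm_addHaar, hdim]
    simp only [hprod]
    rw [IntegrableOn, integrable_indicator_iff measurableSet_Iio, IntegrableOn,
      Measure.restrict_restrict measurableSet_Iio]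
    have : ContinuousOn (fun y : ℝ => y ^ (d - 1) * ((s + y) ^ 3)⁻¹) (Set.Icc 0 1) := by
      refine ContinuousOn.mul (by fun_prop) (ContinuousOn.inv₀ (by fun_prop) ?_)
      intro y hy
      have : 0 < s + y := by linarith [hy.1]
      positivity
    exact this.integrableOn_Icc.mono_set (fun y hy => ⟨le_of_lt hy.2, le_of_lt hy.1⟩)
  rw [hshift, ← ofReal_integral_eq_lintegral_ofReal hint (Filter.Eventually.of_forall hφ0)]
  apply ENNReal.ofReal_le_ofReal
  rw [integral_fun_norm_addHaar, hdim]
  simp only [hprod, nsmul_eq_mul, smul_eq_mul]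
  rw [setIntegral_indicator measurableSet_Iio, Set.Ioi_inter_Iio, ← integral_Ioc_eq_integral_Ioo,
    ← intervalIntegral.integral_of_le zero_le_one, ← mul_assoc]
  gcongr
  exact integral_radial_le d hd s hs

/-- `|v|⁻³ 𝟙(|v| ≥ s)` as an extended nonnegative number. For `s > 0` the value `0 ^ (-3) = ∞` at
`v = 0` is cut off by the indicator. -/
noncomputable def cutoffWeight {d : ℕ} (s : ℝ) (v : EuclideanSpace ℝ (Fin d)) : ℝ≥0∞ :=
  if s ≤ ‖v‖ then (ENNReal.ofReal ‖v‖) ^ (-3 : ℝ) else 0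

/-- Since `s ≤ |v|` and `c y ≤ |v|` with `c ≤ 1`, also `c (s + y) / 2 ≤ |v|`; this replaces the
sharp cutoff by a smooth radial weight. -/
theorem cutoffWeight_le {d : ℕ} {s c y : ℝ} (hs : 0 < s) (hc : 0 < c) (hc1 : c ≤ 1) (hy : 0 ≤ y)
    (v : EuclideanSpace ℝ (Fin d)) (hv : c * y ≤ ‖v‖) :
    cutoffWeight s v ≤ ENNReal.ofReal (8 * (c ^ 3)⁻¹) * ENNReal.ofReal (((s + y) ^ 3)⁻¹) := by
  unfold cutoffWeight
  split_ifs with h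
  · have hvpos : 0 < ‖v‖ := hs.trans_le h
    rw [ENNReal.ofReal_rpow_of_pos hvpos, ← ENNReal.ofReal_mul (by positivity)]
    apply ENNReal.ofReal_le_ofReal
    have : ‖v‖ ^ (-3 : ℝ) = (‖v‖ ^ 3)⁻¹ := by
      rw [Real.rpow_neg hvpos.le]; norm_cast
    rw [this]
    have hkey : c * (s + y) / 2 ≤ ‖v‖ := by nlinarith
    have hinv := inv_anti₀ (by positivity) (pow_le_pow_left₀ (by positivity) hkey 3)
    refine hinv.trans (le_of_eq ?_)
    field_simp
    norm_num
  · exact zero_le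

/-- The local bounds on small balls add up to a bound on a compact set. -/
theorem lintegral_cutoffWeight_le (d : ℕ) (hd : 3 ≤ d)
    (g : EuclideanSpace ℝ (Fin d) → EuclideanSpace ℝ (Fin d)) {K : Set (EuclideanSpace ℝ (Fin d))}
    (hK : IsCompact K)
    (hg : ∀ a, ∃ c : ℝ, 0 < c ∧ c ≤ 1 ∧ ∃ r : ℝ, 0 < r ∧ r ≤ 1 ∧
      ∀ x ∈ Metric.ball a r, c * ‖x - a‖ ≤ ‖g x‖) :
    ∃ C : ℝ, 0 ≤ C ∧ ∀ s : ℝ, 0 < s →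
      ∫⁻ k in K, cutoffWeight s (g k) ≤ ENNReal.ofReal (C * growth d s) := by
  refine hK.induction_on (p := fun t => ∃ C : ℝ, 0 ≤ C ∧ ∀ s : ℝ, 0 < s →
      ∫⁻ k in t, cutoffWeight s (g k) ≤ ENNReal.ofReal (C * growth d s)) ?_ ?_ ?_ ?_
  · exact ⟨0, le_rfl, by simp⟩
  · rintro t u htu ⟨C, hC, h⟩
    exact ⟨C, hC, fun s hs => (lintegral_mono_set htu).trans (h s hs)⟩
  · rintro t u ⟨C, hC, h⟩ ⟨C', hC', h'⟩
    refine ⟨C + C', by positivity, fun s hs => (lintegral_union_le _ _ _).trans ?_⟩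
    have := growth_nonneg d s
    rw [add_mul, ENNReal.ofReal_add (by positivity) (by positivity)]
    exact add_le_add (h s hs) (h' s hs)
  · intro a _
    obtain ⟨c, hc, hc1, r, hr, hr1, hlow⟩ := hg a
    refine ⟨Metric.ball a r, mem_nhdsWithin_of_mem_nhds (Metric.ball_mem_nhds a hr),
      8 * (c ^ 3)⁻¹ * (d * volume.real (Metric.ball (0 : EuclideanSpace ℝ (Fin d)) 1) * 2),
      by positivity, fun s hs => ?_⟩
    calc ∫⁻ k in Metric.ball a r, cutoffWeight s (g k)
        ≤ ∫⁻ k in Metric.ball a r,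
            ENNReal.ofReal (8 * (c ^ 3)⁻¹) * ENNReal.ofReal (((s + ‖k - a‖) ^ 3)⁻¹) :=
          setLIntegral_mono' Metric.isOpen_ball.measurableSet fun k hk =>
            cutoffWeight_le hs hc hc1 (norm_nonneg _) _ (hlow k hk)
      _ ≤ ∫⁻ k in Metric.ball a 1,
            ENNReal.ofReal (8 * (c ^ 3)⁻¹) * ENNReal.ofReal (((s + ‖k - a‖) ^ 3)⁻¹) :=
          lintegral_mono_set (Metric.ball_subset_ball hr1)
      _ = ENNReal.ofReal (8 * (c ^ 3)⁻¹) *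
            ∫⁻ k in Metric.ball a 1, ENNReal.ofReal (((s + ‖k - a‖) ^ 3)⁻¹) :=
          lintegral_const_mul' _ _ ENNReal.ofReal_ne_top
      _ ≤ ENNReal.ofReal (8 * (c ^ 3)⁻¹) * ENNReal.ofReal (d *
            volume.real (Metric.ball (0 : EuclideanSpace ℝ (Fin d)) 1) * (2 * growth d s)) := by
          gcongr
          exact lintegral_ball_le d hd a s hs
      _ = _ := by
          rw [← ENNReal.ofReal_mul (by positivity)]
          congr 1
          ring

theorem isCompact_unitCube (d : ℕ) : IsCompact (unitCube d) := by
  have h : unitCube d = (EuclideanSpace.equiv (Fin d) ℝ).toHomeomorph ⁻¹'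
      (Set.univ.pi fun _ => Set.Icc (0 : ℝ) 1) := by
    ext x
    simp only [unitCube, Set.mem_setOf_eq, Set.mem_preimage, Set.mem_univ_pi]
    rfl
  rw [h, Homeomorph.isCompact_preimage]
  exact isCompact_univ_pi fun _ => isCompact_Icc

theorem morse_satisfies_assumption
    (d : ℕ) (hd : 3 ≤ d) (ω : EuclideanSpace ℝ (Fin d) → ℝ)
    (han : ∀ x, AnalyticAt ℝ ω x) (hper : ZdPeriodic ω)
    (hmorse : ∀ x : EuclideanSpace ℝ (Fin d), gradient ω x = 0 →
      Function.Bijective (fderiv ℝ (fderiv ℝ ω) x)) :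
    (3 < d → ∃ c₀ : ℝ, 0 ≤ c₀ ∧ ∀ s : ℝ, 0 < s →
      (∫⁻ k in unitCube d,
          if s ≤ ‖gradient ω k‖ then (ENNReal.ofReal ‖gradient ω k‖) ^ (-3 : ℝ) else 0)
        ≤ ENNReal.ofReal c₀) ∧
    (d = 3 → ∃ c₀ : ℝ, 0 ≤ c₀ ∧ ∀ s : ℝ, 0 < s →
      (∫⁻ k in unitCube d,
          if s ≤ ‖gradient ω k‖ then (ENNReal.ofReal ‖gradient ω k‖) ^ (-3 : ℝ) else 0)
        ≤ ENNReal.ofReal (c₀ * sabs (Real.log s))) := by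

  have hlow : ∀ a, ∃ c : ℝ, 0 < c ∧ c ≤ 1 ∧ ∃ r : ℝ, 0 < r ∧ r ≤ 1 ∧
      ∀ x ∈ Metric.ball a r, c * ‖x - a‖ ≤ ‖gradient ω x‖ := by
    intro a
    have hnorm : ∀ x, ‖gradient ω x‖ = ‖fderiv ℝ ω x‖ := fun x =>
      LinearIsometryEquiv.norm_map _ _
    simp only [hnorm]
    refine exists_linear_lower_bound (han a).fderiv.differentiableAt fun h0 => ?_
    exact (hmorse a (norm_eq_zero.1 (by rw [hnorm, h0, norm_zero]))).injective
  obtain ⟨C, hC, h⟩ := lintegral_cutoffWeight_le d hd (gradient ω) (isCompact_unitCube d) hlow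
  refine ⟨fun h3 => ⟨C, hC, fun s hs => ?_⟩, fun h3 => ⟨C, hC, fun s hs => ?_⟩⟩
  · have := h s hs
    rwa [growth, if_neg (by omega), mul_one] at this
  · have := h s hs
    rwa [growth, if_pos h3] at this
end
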